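/- The group of the 8 symmetries of the square board (generated by a quarter-turn rotation and a reflection, acting on Fin 8 × Fin 8) acts freely on the set of open knight's tour diagrams of the 8×8 chessboard: no nonidentity board symmetry maps an open tour diagram to itself. Consequently the number T of open tour diagrams equals 8 times the number G of geometrically distinct open tours (orbits under this action), T = 8·G. -/

import Mathlib

/-- The 8×8 chessboard: the set of squares. -/
abbrev Board := Fin 8 × Fin 8

/-- Two squares are related by a knight's move if the multiset of coordinate
distances is `{1, 2}`. -/
def knightMove (p q : Board) : Prop :=
  ({((p.1 : ℤ) - (q.1 : ℤ)).natAbs, ((p.2 : ℤ) - (q.2 : ℤ)).natAbs} : Finset ℕ) =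
    ({1, 2} : Finset ℕ)

/-- An open knight's tour numbering: a sequence of all 64 squares, each appearing
exactly once, with consecutive squares a knight's move apart (a directed
Hamiltonian path of the knight's graph). -/
def IsOpenTourNumbering (f : Fin 64 → Board) : Prop :=
  Function.Bijective f ∧ ∀ i : Fin 63, knightMove (f i.castSucc) (f i.succ)

/-- The underlying (undirected) edge set of a tour numbering: its diagram. -/
def tourEdges (f : Fin 64 → Board) : Finset (Sym2 Board) :=
  Finset.image (fun i : Fin 63 => s(f i.castSucc, f i.succ)) Finset.univ

/-- An open tour diagram: an undirected Hamiltonian path of the knight's graph,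
identified with the edge set of some open tour numbering. -/
def IsOpenTourDiagram (E : Finset (Sym2 Board)) : Prop :=
  ∃ f, IsOpenTourNumbering f ∧ tourEdges f = E

/-- Quarter-turn rotation of the board: `(a, b) ↦ (b, 7 - a)`. -/
def rotQuarter : Equiv.Perm Board :=
  (Equiv.prodComm (Fin 8) (Fin 8)).trans (Equiv.prodCongr (Equiv.refl (Fin 8)) Fin.revPerm)

/-- A reflection of the board: `(a, b) ↦ (7 - a, b)`. -/
def reflectBoard : Equiv.Perm Board :=
  Equiv.prodCongr Fin.revPerm (Equiv.refl (Fin 8))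

/-- The 8 symmetries of the square board: the (dihedral) group generated by the
quarter-turn rotation and a reflection. -/
def boardSymmetries : Subgroup (Equiv.Perm Board) :=
  Subgroup.closure {rotQuarter, reflectBoard}

/-- Action of a board permutation on an edge set. -/
def mapEdges (g : Equiv.Perm Board) (E : Finset (Sym2 Board)) : Finset (Sym2 Board) :=
  E.image (Sym2.map g)

/-- Two open tour diagrams are geometrically equivalent if a board symmetry maps
one to the other. -/
def geomEquiv (E E' : {E : Finset (Sym2 Board) // IsOpenTourDiagram E}) : Prop :=
  ∃ g ∈ boardSymmetries, mapEdges g E.1 = E'.1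

theorem knightMove_iff (p q : Board) : knightMove p q ↔
    (((p.1 : ℤ) - (q.1 : ℤ)).natAbs = 1 ∧ ((p.2 : ℤ) - (q.2 : ℤ)).natAbs = 2) ∨
    (((p.1 : ℤ) - (q.1 : ℤ)).natAbs = 2 ∧ ((p.2 : ℤ) - (q.2 : ℤ)).natAbs = 1) := by
  unfold knightMove
  generalize ((p.1 : ℤ) - (q.1 : ℤ)).natAbs = a
  generalize ((p.2 : ℤ) - (q.2 : ℤ)).natAbs = b
  constructor
  · intro h
    have h1 : a ∈ ({1, 2} : Finset ℕ) := by rw [← h]; simp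
    have h2 : b ∈ ({1, 2} : Finset ℕ) := by rw [← h]; simp
    have h3 : 1 ∈ ({a, b} : Finset ℕ) := by rw [h]; simp
    have h4 : 2 ∈ ({a, b} : Finset ℕ) := by rw [h]; simp
    simp only [Finset.mem_insert, Finset.mem_singleton] at h1 h2 h3 h4
    omega
  · rintro (⟨rfl, rfl⟩ | ⟨rfl, rfl⟩)
    · rfl
    · exact Finset.pair_comm _ _

/-- Explicit parametrisation of the eight symmetries. -/
def boardSym (a b c : Bool) : Equiv.Perm Board :=
  (if c then Equiv.prodComm (Fin 8) (Fin 8) else Equiv.refl _).trans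
    (Equiv.prodCongr (if a then Fin.revPerm else Equiv.refl _)
      (if b then Fin.revPerm else Equiv.refl _))

theorem boardSym_mul (a b c a' b' c' : Bool) : boardSym a b c * boardSym a' b' c' =
    boardSym (xor a (if c then b' else a')) (xor b (if c then a' else b')) (xor c c') := by
  ext p : 1
  obtain ⟨p1, p2⟩ := p
  cases a <;> cases b <;> cases c <;> cases a' <;> cases b' <;> cases c' <;>
    simp [boardSym]

theorem boardSym_one : boardSym false false false = 1 := by
  ext p : 1
  simp [boardSym]

theorem boardSym_inv (a b c : Bool) : (boardSym a b c)⁻¹ =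
    boardSym (if c then b else a) (if c then a else b) c := by
  rw [inv_eq_iff_mul_eq_one, boardSym_mul, ← boardSym_one]
  cases a <;> cases b <;> cases c <;> rfl

theorem rotQuarter_eq : rotQuarter = boardSym false true true := rfl

theorem reflectBoard_eq : reflectBoard = boardSym true false false := rfl

theorem mem_boardSymmetries_iff (g : Equiv.Perm Board) :
    g ∈ boardSymmetries ↔ ∃ a b c, g = boardSym a b c := by
  constructor
  · intro hg
    induction hg using Subgroup.closure_induction with
    | mem x hx =>
      rcases hx with rfl | rfl
      · exact ⟨_, _, _, rotQuarter_eq⟩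
      · exact ⟨_, _, _, reflectBoard_eq⟩
    | one => exact ⟨_, _, _, boardSym_one.symm⟩
    | mul x y _ _ hx hy =>
      obtain ⟨a, b, c, rfl⟩ := hx
      obtain ⟨a', b', c', rfl⟩ := hy
      exact ⟨_, _, _, boardSym_mul _ _ _ _ _ _⟩
    | inv x _ hx =>
      obtain ⟨a, b, c, rfl⟩ := hx
      exact ⟨_, _, _, boardSym_inv _ _ _⟩
  · rintro ⟨a, b, c, rfl⟩
    have hr : boardSym false true true ∈ boardSymmetries :=
      Subgroup.subset_closure (Or.inl rotQuarter_eq.symm)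
    have hs : boardSym true false false ∈ boardSymmetries :=
      Subgroup.subset_closure (Or.inr reflectBoard_eq.symm)
    have key : boardSym a b c =
        (if a then boardSym true false false else 1) *
        (if xor b c then boardSym false true true * boardSym true false false *
          (boardSym false true true)⁻¹ else 1) *
        (if c then boardSym false true true else 1) := by
      simp only [boardSym_inv, boardSym_mul, ← boardSym_one]
      cases a <;> cases b <;> cases c <;> simp [boardSym_mul]
    rw [key]
    refine mul_mem (mul_mem ?_ ?_) ?_ <;> split_ifs
    · exact hs
    · exact one_mem _
    · exact mul_mem (mul_mem hr hs) (inv_mem hr)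
    · exact one_mem _
    · exact hr
    · exact one_mem _

theorem boardSym_injective :
    Function.Injective (fun t : Bool × Bool × Bool => boardSym t.1 t.2.1 t.2.2) := by
  intro s t h
  have h1 : boardSym s.1 s.2.1 s.2.2 (0, 1) = boardSym t.1 t.2.1 t.2.2 (0, 1) :=
    congrArg (fun e : Equiv.Perm Board => e (0, 1)) h
  revert h1
  clear h
  revert s t
  decide

theorem card_boardSymmetries : Nat.card boardSymmetries = 8 := by
  have e : Bool × Bool × Bool ≃ boardSymmetries :=
    Equiv.ofBijective (fun t => ⟨boardSym t.1 t.2.1 t.2.2,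
      (mem_boardSymmetries_iff _).2 ⟨_, _, _, rfl⟩⟩) (by
        constructor
        · intro s t h
          exact boardSym_injective (congrArg Subtype.val h)
        · rintro ⟨g, hg⟩
          obtain ⟨a, b, c, rfl⟩ := (mem_boardSymmetries_iff _).1 hg
          exact ⟨(a, b, c), rfl⟩)
  rw [← Nat.card_congr e]
  simp

theorem knightMove_map {g : Equiv.Perm Board} (hg : g ∈ boardSymmetries) {p q : Board}
    (h : knightMove p q) : knightMove (g p) (g q) := by
  obtain ⟨a, b, c, rfl⟩ := (mem_boardSymmetries_iff _).1 hg
  obtain ⟨p1, p2⟩ := p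
  obtain ⟨q1, q2⟩ := q
  rw [knightMove_iff] at h ⊢
  cases a <;> cases b <;> cases c <;> simp [boardSym, Fin.val_rev] at h ⊢ <;> omega

/-- An involutive symmetry never moves a square by a knight's move. -/
theorem not_knightMove_sym {g : Equiv.Perm Board} (hg : g ∈ boardSymmetries) {p : Board}
    (h : g (g p) = p) : ¬ knightMove p (g p) := by
  obtain ⟨a, b, c, rfl⟩ := (mem_boardSymmetries_iff _).1 hg
  obtain ⟨p1, p2⟩ := p
  rw [knightMove_iff]
  cases a <;> cases b <;> cases c <;>
    simp [boardSym, Fin.val_rev, Prod.ext_iff, Fin.ext_iff] at h ⊢ <;> omega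

/-- An injective self-map of the path `0, …, 63` preserving adjacency is the identity or swaps
the two middle vertices. -/
theorem path_rigid (h : ℕ → ℕ) (hlt : ∀ i, i < 64 → h i < 64)
    (hinj : ∀ i j, i < 64 → j < 64 → h i = h j → i = j)
    (hadj : ∀ i, i + 1 < 64 → h (i + 1) = h i + 1 ∨ h i = h (i + 1) + 1) :
    (∀ i, i < 64 → h i = i) ∨ (h 31 = 32 ∧ h 32 = 31) := by
  rcases hadj 0 (by norm_num) with h0 | h0
  · left
    have up : ∀ i, i + 1 < 64 → h (i + 1) = h i + 1 := by
      intro i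
      induction i with
      | zero => intro _; exact h0
      | succ k ih =>
        intro hk
        have h1 := ih (by omega)
        have h2 := hadj (k + 1) hk
        have h3 := hinj k (k + 1 + 1) (by omega) hk
        omega
    have lin : ∀ i, i < 64 → h i = h 0 + i := by
      intro i
      induction i with
      | zero => intro _; rfl
      | succ k ih =>
        intro hk
        have h1 := ih (by omega)
        have h2 := up k hk
        omega
    intro i hi
    have h1 := lin i hi
    have h2 := lin 63 (by norm_num)
    have h3 := hlt 63 (by norm_num)
    omega
  · right
    have down : ∀ i, i + 1 < 64 → h i = h (i + 1) + 1 := by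
      intro i
      induction i with
      | zero => intro _; exact h0
      | succ k ih =>
        intro hk
        have h1 := ih (by omega)
        have h2 := hadj (k + 1) hk
        have h3 := hinj k (k + 1 + 1) (by omega) hk
        omega
    have lin : ∀ i, i < 64 → h i + i = h 0 := by
      intro i
      induction i with
      | zero => intro _; rfl
      | succ k ih =>
        intro hk
        have h1 := ih (by omega)
        have h2 := down k hk
        omega
    have h1 := lin 31 (by norm_num)
    have h2 := lin 63 (by norm_num)
    have h3 := hlt 0 (by norm_num)
    have h4 := lin 32 (by norm_num)
    omega

theorem free_action (g : Equiv.Perm Board) (hg : g ∈ boardSymmetries)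
    (E : Finset (Sym2 Board)) (hE : IsOpenTourDiagram E) (hgE : mapEdges g E = E) : g = 1 := by
  obtain ⟨f, ⟨hf, hk⟩, rfl⟩ := hE
  let e : Fin 64 ≃ Board := Equiv.ofBijective f hf
  have he : ∀ i, e i = f i := fun _ => rfl
  let σ : Fin 64 → Fin 64 := fun i => e.symm (g (f i))
  have hσ : ∀ i, f (σ i) = g (f i) := fun i => e.apply_symm_apply _
  have hσinj : Function.Injective σ := fun i j h =>
    hf.1 (g.injective (e.symm.injective h))
  have hadj : ∀ i : Fin 63, (σ i.succ).val = (σ i.castSucc).val + 1 ∨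
      (σ i.castSucc).val = (σ i.succ).val + 1 := by
    intro i
    have hm : s(g (f i.castSucc), g (f i.succ)) ∈ tourEdges f := by
      rw [← hgE]
      refine Finset.mem_image.2 ⟨s(f i.castSucc, f i.succ), ?_, by simp⟩
      exact Finset.mem_image.2 ⟨i, Finset.mem_univ _, rfl⟩
    obtain ⟨j, -, hj⟩ := Finset.mem_image.1 hm
    rw [← hσ, ← hσ, Sym2.eq_iff] at hj
    rcases hj with ⟨h1, h2⟩ | ⟨h1, h2⟩
    · left; rw [← hf.1 h1, ← hf.1 h2]; simp
    · right; rw [← hf.1 h1, ← hf.1 h2]; simp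
  let h : ℕ → ℕ := fun n => if hn : n < 64 then (σ ⟨n, hn⟩).val else 0
  have hval : ∀ n (hn : n < 64), h n = (σ ⟨n, hn⟩).val := fun n hn => dif_pos hn
  rcases path_rigid h
    (fun i hi => by rw [hval i hi]; exact (σ _).isLt)
    (fun i j hi hj hij => by
      rw [hval i hi, hval j hj] at hij
      exact congrArg Fin.val (hσinj (Fin.ext hij)))
    (fun i hi => by
      rw [hval (i + 1) hi, hval i (by omega)]
      exact hadj ⟨i, by omega⟩) with hid | ⟨h1, h2⟩
  · ext p : 1
    obtain ⟨i, rfl⟩ := hf.2 p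
    rw [← hσ]
    have : σ i = i := Fin.ext ((hval i.val i.isLt).symm.trans (hid i.val i.isLt))
    rw [this]; rfl
  · exfalso
    rw [hval _ (by norm_num)] at h1 h2
    have g1 : g (f 31) = f 32 := by rw [← hσ]; exact congrArg f (Fin.ext h1)
    have g2 : g (f 32) = f 31 := by rw [← hσ]; exact congrArg f (Fin.ext h2)
    refine not_knightMove_sym hg (p := f 31) (by rw [g1, g2]) ?_
    rw [g1]
    exact hk 31

theorem mapEdges_diagram {g : Equiv.Perm Board} (hg : g ∈ boardSymmetries)
    {E : Finset (Sym2 Board)} (hE : IsOpenTourDiagram E) : IsOpenTourDiagram (mapEdges g E) := by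
  obtain ⟨f, ⟨hf, hk⟩, rfl⟩ := hE
  refine ⟨g ∘ f, ⟨g.bijective.comp hf, fun i => knightMove_map hg (hk i)⟩, ?_⟩
  simp only [tourEdges, mapEdges, Finset.image_image]
  rfl

/-- The action of the board symmetries on open tour diagrams. -/
instance diagramAction :
    MulAction boardSymmetries {E : Finset (Sym2 Board) // IsOpenTourDiagram E} where
  smul g E := ⟨mapEdges g.1 E.1, mapEdges_diagram g.2 E.2⟩
  one_smul E := Subtype.ext (by
    change Finset.image (Sym2.map (id : Board → Board)) E.1 = E.1
    rw [Sym2.map_id, Finset.image_id])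
  mul_smul g g' E := Subtype.ext (by
    change Finset.image (Sym2.map ((g.1 : Board → Board) ∘ (g'.1 : Board → Board))) E.1 =
      Finset.image (Sym2.map g.1) (Finset.image (Sym2.map g'.1) E.1)
    rw [Finset.image_image, Sym2.map_comp])

theorem card_diagrams : Nat.card {E : Finset (Sym2 Board) // IsOpenTourDiagram E} =
    8 * Nat.card (Quot geomEquiv) := by
  have hst : ∀ E : {E : Finset (Sym2 Board) // IsOpenTourDiagram E},
      MulAction.stabilizer boardSymmetries E = ⊥ := by
    intro E
    rw [eq_bot_iff]
    intro g hg
    exact Subtype.ext (free_action g.1 g.2 E.1 E.2 (congrArg Subtype.val hg))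
  have e1 := MulAction.selfEquivSigmaOrbitsQuotientStabilizer boardSymmetries
    {E : Finset (Sym2 Board) // IsOpenTourDiagram E}
  have hrel : ∀ E E', (MulAction.orbitRel boardSymmetries
      {E : Finset (Sym2 Board) // IsOpenTourDiagram E}) E E' ↔ geomEquiv E E' := by
    intro E E'
    rw [MulAction.orbitRel_apply, MulAction.mem_orbit_symm]
    constructor
    · rintro ⟨g, hg⟩
      exact ⟨g.1, g.2, congrArg Subtype.val hg⟩
    · rintro ⟨g, hg, h⟩
      exact ⟨⟨g, hg⟩, Subtype.ext h⟩
  have e2 : MulAction.orbitRel.Quotient boardSymmetries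
      {E : Finset (Sym2 Board) // IsOpenTourDiagram E} ≃ Quot geomEquiv :=
    Quot.congr (Equiv.refl _) hrel
  have hfin : Finite (MulAction.orbitRel.Quotient boardSymmetries
      {E : Finset (Sym2 Board) // IsOpenTourDiagram E}) := Quotient.finite _
  have := Fintype.ofFinite (MulAction.orbitRel.Quotient boardSymmetries
      {E : Finset (Sym2 Board) // IsOpenTourDiagram E})
  rw [Nat.card_congr e1, Nat.card_sigma, ← Nat.card_congr e2]
  have hc : ∀ ω : MulAction.orbitRel.Quotient boardSymmetries
      {E : Finset (Sym2 Board) // IsOpenTourDiagram E},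
      Nat.card (boardSymmetries ⧸ MulAction.stabilizer boardSymmetries ω.out) = 8 := by
    intro ω
    rw [hst, ← card_boardSymmetries]
    exact Subgroup.index_bot
  rw [Finset.sum_congr rfl (fun ω _ => hc ω)]
  simp [mul_comm]

/-- The 8 board symmetries act freely on open tour diagrams (no
nonidentity symmetry fixes a diagram), and hence `T = 8 · G` where `G` is the
number of orbits (geometrically distinct open tours). -/
theorem board_symmetries_act_freely_and_T_eq_eight_G :
    (∀ g ∈ boardSymmetries, ∀ E : Finset (Sym2 Board), IsOpenTourDiagram E →
      mapEdges g E = E → g = 1) ∧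
    Nat.card {E : Finset (Sym2 Board) // IsOpenTourDiagram E} =
      8 * Nat.card (Quot geomEquiv) := by
  exact ⟨free_action, card_diagrams⟩
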